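/- Let n ≥ 1, let A be an n×n integer matrix, let μ₁ ≠ μ₂ be real numbers, and let v₁, v₂ ∈ ℝⁿ be nonzero vectors with A v₁ = μ₁ v₁, A v₂ = μ₂ v₂, and such that v := v₁ + v₂ has integer coordinates, v ∈ ℤⁿ. Then the subgroup {x ∈ ℤⁿ : x ∈ span_ℝ{v₁, v₂}} of ℤⁿ is a free abelian group of rank exactly 2. -/

import Mathlib

/-- The coordinatewise coercion `ℤⁿ → ℝⁿ`, as a `ℤ`-linear map. -/
noncomputable def intCastPiLinearMap (n : ℕ) : (Fin n → ℤ) →ₗ[ℤ] (Fin n → ℝ) :=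
  LinearMap.pi fun i => (Int.castAddHom ℝ).toIntLinearMap.comp (LinearMap.proj i)

/-- Let `A` be an `n × n` integer matrix, `μ₁ ≠ μ₂` real numbers, and `v₁, v₂ ∈ ℝⁿ`
nonzero eigenvectors with `A v₁ = μ₁ v₁`, `A v₂ = μ₂ v₂`, such that `v := v₁ + v₂` has
integer coordinates. Then the subgroup `{x ∈ ℤⁿ : x ∈ span_ℝ {v₁, v₂}}` of `ℤⁿ` is a free
abelian group of rank exactly `2`. -/
theorem lattice_in_invariant_plane_rank_two
    (n : ℕ) (hn : 1 ≤ n) (A : Matrix (Fin n) (Fin n) ℤ)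
    (μ₁ μ₂ : ℝ) (hμ : μ₁ ≠ μ₂) (v₁ v₂ : Fin n → ℝ) (hv₁ : v₁ ≠ 0) (hv₂ : v₂ ≠ 0)
    (h₁ : (A.map (Int.cast : ℤ → ℝ)).mulVec v₁ = μ₁ • v₁)
    (h₂ : (A.map (Int.cast : ℤ → ℝ)).mulVec v₂ = μ₂ • v₂)
    (v : Fin n → ℤ) (hv : intCastPiLinearMap n v = v₁ + v₂) :
    Module.Free ℤ
      ↥(((Submodule.span ℝ {v₁, v₂}).restrictScalars ℤ).comap (intCastPiLinearMap n)) ∧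
    Module.finrank ℤ
      ↥(((Submodule.span ℝ {v₁, v₂}).restrictScalars ℤ).comap (intCastPiLinearMap n)) = 2 := by
  refine ⟨inferInstance, ?_⟩
  set f := intCastPiLinearMap n with hf
  have fa : ∀ x i, f x i = (x i : ℝ) := fun x i => rfl
  have finj : Function.Injective f := by
    intro x y h
    ext i
    have := congrFun h i
    rw [fa, fa] at this
    exact_mod_cast this
  set P := Submodule.span ℝ {v₁, v₂} with hP
  set L := (P.restrictScalars ℤ).comap f with hL
  have m1 : v₁ ∈ P := Submodule.subset_span (by simp)
  have m2 : v₂ ∈ P := Submodule.subset_span (by simp)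
  have hAv : f (A.mulVec v) = μ₁ • v₁ + μ₂ • v₂ := by
    rw [← h₁, ← h₂, ← Matrix.mulVec_add, ← hv]
    ext i
    exact RingHom.map_mulVec (Int.castRingHom ℝ) A v i
  have hdisc : DiscreteTopology (L.map f) := by
    have hle : L.map f ≤ Submodule.span ℤ (Set.range (Pi.basisFun ℝ (Fin n))) := by
      rintro _ ⟨x, -, rfl⟩
      rw [Module.Basis.mem_span_iff_repr_mem]
      intro i
      exact ⟨x i, by simp [fa]⟩
    have hD : DiscreteTopology (Submodule.span ℤ (Set.range (Pi.basisFun ℝ (Fin n)))) := inferInstance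
    exact DiscreteTopology.of_subset (s := (Submodule.span ℤ (Set.range (Pi.basisFun ℝ (Fin n))) : Set (Fin n → ℝ))) hD hle
  have hd : μ₂ - μ₁ ≠ 0 := sub_ne_zero.mpr hμ.symm
  have hspan : Submodule.span ℝ (L.map f : Set (Fin n → ℝ)) = P := by
    apply le_antisymm
    · rw [Submodule.span_le]
      rintro _ ⟨x, hx, rfl⟩
      exact hx
    · set Q := Submodule.span ℝ (L.map f : Set (Fin n → ℝ)) with hQ
      have q1 : v₁ + v₂ ∈ Q := by
        rw [← hv]
        refine Submodule.subset_span ⟨v, ?_, rfl⟩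
        change f v ∈ P
        rw [hv]
        exact P.add_mem m1 m2
      have q2 : μ₁ • v₁ + μ₂ • v₂ ∈ Q := by
        rw [← hAv]
        refine Submodule.subset_span ⟨A.mulVec v, ?_, rfl⟩
        change f (A.mulVec v) ∈ P
        rw [hAv]
        exact P.add_mem (P.smul_mem _ m1) (P.smul_mem _ m2)
      have q3 : v₂ ∈ Q := by
        have h := Q.smul_mem (μ₂ - μ₁)⁻¹ (Q.sub_mem q2 (Q.smul_mem μ₁ q1))
        have e : μ₁ • v₁ + μ₂ • v₂ - μ₁ • (v₁ + v₂) = (μ₂ - μ₁) • v₂ := by module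
        rwa [e, inv_smul_smul₀ hd] at h
      have q4 : v₁ ∈ Q := by simpa using Q.sub_mem q1 q3
      rw [hP, Submodule.span_le]
      rintro x (rfl | rfl)
      · exact q4
      · exact q3
  have hli : LinearIndependent ℝ ![v₁, v₂] := by
    rw [LinearIndependent.pair_iff' hv₁]
    intro a ha
    have h3 := h₂
    rw [← ha, Matrix.mulVec_smul, h₁] at h3
    have e : (μ₂ - μ₁) • (a • v₁) = 0 := by
      rw [sub_smul, ← h3]
      module
    rw [ha] at e
    exact (smul_ne_zero hd hv₂) e
  have hPr : Module.finrank ℝ P = 2 := by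
    have := finrank_span_eq_card hli
    have hr : Set.range ![v₁, v₂] = {v₁, v₂} := by
      ext x; simp [eq_comm, or_comm]
    rw [hr, ← hP] at this
    simpa using this
  have key := Real.finrank_eq_int_finrank_of_discrete (s := (L.map f : Set (Fin n → ℝ)))
    (by rw [Submodule.span_eq]; exact hdisc)
  rw [Set.finrank, Set.finrank, hspan, hPr, Submodule.span_eq] at key
  rw [key]
  exact (Submodule.equivMapOfInjective f finj L).finrank_eq
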